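/- Let A be a unital C*-algebra ordered by its cone of positive elements, and let τ : A → ℂ be a positive linear functional that is tracial, i.e., τ(ab) = τ(ba) for all a, b ∈ A. Then for every invertible a ∈ A and every ε > 0, the numbers τ[(a*a + ε)⁻¹(aa* + ε)⁻¹] and τ[a⁻²(a⁻²)*] are real and satisfy τ[(a*a + ε)⁻¹(aa* + ε)⁻¹] ≤ τ[a⁻²(a⁻²)*]. -/

import Mathlib

/-!
Put `b = a⁻¹`, `X = (aa*)⁻¹ = b*b`, `Y = (a*a)⁻¹ = bb*`, `Q = (aa* + ε)⁻¹`, `P = (a*a + ε)⁻¹`.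
By traciality `τ[b²(b²)*] = τ[XY]`, and `τ[PQ] = τ[QP]`. A positive trace is nonnegative on
products of two positive elements (`trace_mul_nonneg`), and `0 ≤ Q ≤ X`, `0 ≤ P ≤ Y`
(`regularized_inverse_bounds`), so `τ[XY] - τ[QP] = τ[(X - Q)Y] + τ[Q(Y - P)] ≥ 0`.

The order bounds come from explicit sums of squares: with `S = c*c`, `T = S + ε` and `Q = T⁻¹`,
one has `Q = Q(S + ε)Q` and `S⁻¹ - Q = Q(T S⁻¹ T - T)Q = εQ² + ε² Q S⁻¹ Q`.
-/

/-- A positive trace is nonnegative on products of positive elements: if `v = w*w`, then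
`τ(u v) = τ(w u w*)`, and a general positive `v` is a sum of such squares. -/
theorem trace_mul_nonneg
    {A : Type*} [NormedRing A] [StarRing A] [NormedAlgebra ℂ A]
    [PartialOrder A] [StarOrderedRing A]
    (τ : A →ₗ[ℂ] ℂ)
    (hpos : ∀ x : A, 0 ≤ x → 0 ≤ (τ x).re ∧ (τ x).im = 0)
    (htr : ∀ x y : A, τ (x * y) = τ (y * x))
    {u v : A} (hu : 0 ≤ u) (hv : 0 ≤ v) :
    0 ≤ (τ (u * v)).re ∧ (τ (u * v)).im = 0 := by
  rw [StarOrderedRing.nonneg_iff] at hv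
  induction hv using AddSubmonoid.closure_induction with
  | mem x hx =>
    obtain ⟨w, rfl⟩ := hx
    have h : τ (u * (star w * w)) = τ (w * u * star w) := by
      rw [← mul_assoc, htr, mul_assoc]
    simp only [h]
    exact hpos _ (star_right_conjugate_nonneg hu w)
  | zero => simp
  | add x y _ _ hx hy =>
    rw [mul_add, map_add, Complex.add_re, Complex.add_im]
    exact ⟨add_nonneg hx.1 hy.1, by rw [hx.2, hy.2, add_zero]⟩

/-- Multiplying a positive element by a real `r ≥ 0` is conjugation by `√r`. -/
theorem real_smul_nonneg
    {A : Type*} [NormedRing A] [StarRing A] [NormedAlgebra ℂ A] [StarModule ℂ A]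
    [PartialOrder A] [StarOrderedRing A] {r : ℝ} (hr : 0 ≤ r) {x : A} (hx : 0 ≤ x) :
    0 ≤ (r : ℂ) • x := by
  have h := star_left_conjugate_nonneg hx (((√r : ℝ) : ℂ) • (1 : A))
  have e : star (((√r : ℝ) : ℂ) • (1 : A)) * x * (((√r : ℝ) : ℂ) • (1 : A)) = (r : ℂ) • x := by
    simp only [star_smul, star_one, smul_mul_assoc, mul_smul_comm, one_mul, mul_one, smul_smul]
    rw [Complex.star_def, Complex.conj_ofReal, ← Complex.ofReal_mul, Real.mul_self_sqrt hr]
  rwa [e] at h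

/-- For `c` invertible with inverse `d`, so that `(c*c)⁻¹ = dd*`, one has
`0 ≤ (c*c + ε)⁻¹ ≤ (c*c)⁻¹`. -/
theorem regularized_inverse_bounds
    {A : Type*} [NormedRing A] [StarRing A] [NormedAlgebra ℂ A] [StarModule ℂ A]
    [PartialOrder A] [StarOrderedRing A]
    {c d : A} (hcd : c * d = 1) (hdc : d * c = 1) {ε : ℝ} (hε : 0 < ε) :
    0 ≤ Ring.inverse (star c * c + (ε : ℂ) • 1) ∧
      Ring.inverse (star c * c + (ε : ℂ) • 1) ≤ d * star d := by
  set S := star c * c with hS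
  set X := d * star d with hX
  set T := S + (ε : ℂ) • (1 : A) with hT
  by_cases hu : IsUnit T
  swap
  -- `T` is in fact always a unit in a C⋆-algebra, but the bounds also hold for the
  -- value `Ring.inverse T = 0` taken at a non-unit, so its invertibility is not needed.
  · rw [Ring.inverse_non_unit _ hu]
    exact ⟨le_rfl, mul_star_self_nonneg d⟩
  set Q := Ring.inverse T with hQ
  have hQT : Q * T = 1 := Ring.inverse_mul_cancel _ hu
  have hTQ : T * Q = 1 := Ring.mul_inverse_cancel _ hu
  have hTs : star T = T := by
    simp [hT, hS, star_smul]
  have hQs : star Q = Q := by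
    have h : star Q * T = 1 := by rw [← hTs, ← star_mul, hTQ, star_one]
    exact left_inv_eq_right_inv h hTQ
  have hSX : S * X = 1 := by
    rw [hS, hX, mul_assoc, ← mul_assoc c, hcd, one_mul, ← star_mul, hdc, star_one]
  have hXS : X * S = 1 := by
    rw [hS, hX, mul_assoc, ← mul_assoc (star d), ← star_mul, hcd, star_one, one_mul, hdc]
  have hconj : ∀ y : A, 0 ≤ y → 0 ≤ Q * y * Q := fun y hy => by
    simpa only [hQs] using star_left_conjugate_nonneg hy Q
  have h1 : (0 : A) ≤ (ε : ℂ) • 1 :=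
    real_smul_nonneg hε.le (by simp)
  refine ⟨?_, ?_⟩
  · have h := hconj T (add_nonneg (star_mul_self_nonneg c) h1)
    rwa [hQT, one_mul] at h
  · have h2 : (0 : A) ≤ (ε : ℂ) • ((ε : ℂ) • X) :=
      real_smul_nonneg hε.le (real_smul_nonneg hε.le (mul_star_self_nonneg d))
    have h := hconj _ (add_nonneg h1 h2)
    have e : (ε : ℂ) • (1 : A) + (ε : ℂ) • ((ε : ℂ) • X) = T * X * T - T := by
      simp only [hT, add_mul, mul_add, hSX, hXS, smul_mul_assoc, mul_smul_comm, one_mul,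
        mul_one, smul_add]
      abel
    have e' : Q * (T * X * T - T) * Q = X - Q := by
      calc Q * (T * X * T - T) * Q = (Q * T) * X * (T * Q) - (Q * T) * Q := by noncomm_ring
        _ = X - Q := by rw [hQT, hTQ, one_mul, mul_one, one_mul]
    rw [e, e'] at h
    exact sub_nonneg.mp h

theorem trace_inverse_estimate
    {A : Type*} [NormedRing A] [StarRing A] [CStarRing A] [CompleteSpace A]
    [NormedAlgebra ℂ A] [StarModule ℂ A] [PartialOrder A] [StarOrderedRing A]
    (τ : A →ₗ[ℂ] ℂ)
    (hpos : ∀ x : A, 0 ≤ x → 0 ≤ (τ x).re ∧ (τ x).im = 0)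
    (htr : ∀ x y : A, τ (x * y) = τ (y * x))
    (a : A) (ha : IsUnit a) (ε : ℝ) (hε : 0 < ε) :
    (τ (Ring.inverse (star a * a + (ε : ℂ) • 1) *
        Ring.inverse (a * star a + (ε : ℂ) • 1))).im = 0 ∧
    (τ (Ring.inverse a ^ 2 * star (Ring.inverse a ^ 2))).im = 0 ∧
    (τ (Ring.inverse (star a * a + (ε : ℂ) • 1) *
        Ring.inverse (a * star a + (ε : ℂ) • 1))).re ≤
      (τ (Ring.inverse a ^ 2 * star (Ring.inverse a ^ 2))).re := by
  have hab : a * Ring.inverse a = 1 := Ring.mul_inverse_cancel _ ha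
  have hba : Ring.inverse a * a = 1 := Ring.inverse_mul_cancel _ ha
  set b := Ring.inverse a
  obtain ⟨hP, hPY⟩ := regularized_inverse_bounds hab hba hε
  obtain ⟨hQ, hQX⟩ := regularized_inverse_bounds (c := star a) (d := star b)
    (by rw [← star_mul, hba, star_one]) (by rw [← star_mul, hab, star_one]) hε
  rw [star_star] at hQ hQX
  rw [star_star] at hQX
  set P := Ring.inverse (star a * a + (ε : ℂ) • 1)
  set Q := Ring.inverse (a * star a + (ε : ℂ) • 1)
  have hY : 0 ≤ b * star b := mul_star_self_nonneg b
  have hXY : τ (b ^ 2 * star (b ^ 2)) = τ ((star b * b) * (b * star b)) := by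
    rw [star_pow, pow_two, pow_two, ← mul_assoc, htr]
    simp only [mul_assoc]
  have h1 := trace_mul_nonneg τ hpos htr (sub_nonneg.mpr hQX) hY
  have h2 := trace_mul_nonneg τ hpos htr hQ (sub_nonneg.mpr hPY)
  refine ⟨(trace_mul_nonneg τ hpos htr hP hQ).2, (hpos _ (mul_star_self_nonneg _)).2, ?_⟩
  rw [hXY, htr P Q]
  rw [sub_mul, map_sub, Complex.sub_re] at h1
  rw [mul_sub, map_sub, Complex.sub_re] at h2
  linarith [h1.1, h2.1]
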